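/- (Theorem 6.3, fully symmetric Maxwell count.) Let (G,p) be an S-symmetric framework of type Φ in ℝ^d. Choose one representative from each vertex orbit, say i₁,…,i_k, and set c = Σ_{t=1}^{k} dim U(p_{i_t}); let r be the number of edge orbits of the S-action on E; and let m be the dimension of the linear subspace of (ℝ^d)^V consisting of all fully (S,Φ)-symmetric infinitesimal rigid motions of (G,p). If r < c − m, then (G,p) has a fully (S,Φ)-symmetric infinitesimal flex, i.e., a fully (S,Φ)-symmetric infinitesimal motion that is not an infinitesimal rigid motion. -/

import Mathlib

open scoped Classical

noncomputable section

abbrev Euc (d : ℕ) : Type := EuclideanSpace ℝ (Fin d)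

/-- The subspace of points of `ℝ^d` fixed by a linear isometry (orthogonal transformation). -/
def fixedSpace {d : ℕ} (x : Euc d ≃ₗᵢ[ℝ] Euc d) : Submodule ℝ (Euc d) :=
  LinearMap.ker (x.toLinearEquiv.toLinearMap - LinearMap.id)

/-!
A fully symmetric velocity field is determined by its values at the orbit representatives, and
the value at a representative `w` may be any vector fixed by the stabilizer of `w`; so the
symmetric fields form a space of dimension `c`. On such a field the length constraint of an edge
is invariant along the edge orbit, so being an infinitesimal motion amounts to at most `r` linear
equations and the symmetric motions have dimension at least `c - r`. If this exceeds `m`, they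
cannot all be rigid.
-/

open Module
open scoped InnerProductSpace

theorem finrank_le_finrank_inf_ker_add_card {k M ι : Type*} [DivisionRing k] [AddCommGroup M]
    [Module k M] [Fintype ι] (U : Submodule k M) [FiniteDimensional k U] (f : M →ₗ[k] (ι → k)) :
    finrank k U ≤ finrank k ↥(U ⊓ f.ker) + Fintype.card ι := by
  have hker : finrank k (f.domRestrict U).ker = finrank k ↥(U ⊓ f.ker) := by
    rw [← Submodule.finrank_map_subtype_eq, LinearMap.ker_domRestrict, Submodule.map_comap_subtype]
  have hrange : finrank k (f.domRestrict U).range ≤ Fintype.card ι :=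
    (Submodule.finrank_le _).trans_eq (finrank_fintype_fun_eq_card k)
  rw [← (f.domRestrict U).finrank_range_add_finrank_ker, hker, add_comm]
  gcongr

section SymmetricMaps

variable {k S V E : Type*} [Group S]

/-- `R` contains exactly one representative of each orbit of the action `Φ` on `V`. -/
def IsOrbitTransversal (Φ : S →* Equiv.Perm V) (R : Set V) : Prop :=
  ∀ v : V, ∃! w : V, w ∈ R ∧ ∃ x : S, Φ x w = v

section CommSemiring

variable [CommSemiring k] [AddCommMonoid E] [Module k E]

/-- The fully `(S, Φ)`-symmetric maps `V → E`, that is, the `S`-equivariant ones. -/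
def symmetricMaps (ρ : Representation k S E) (Φ : S →* Equiv.Perm V) : Submodule k (V → E) where
  carrier := {u | ∀ x i, ρ x (u i) = u (Φ x i)}
  add_mem' hu hv x i := by simp only [Pi.add_apply, map_add, hu x i, hv x i]
  zero_mem' x _ := map_zero (ρ x)
  smul_mem' a u hu x i := by simp only [Pi.smul_apply, map_smul, hu x i]

/-- The vectors fixed by the stabilizer of the vertex `w`; this is `U(p_w)` in the theory of
symmetric frameworks. -/
def siteSpace (ρ : Representation k S E) (Φ : S →* Equiv.Perm V) (w : V) : Submodule k E where
  carrier := {a | ∀ x, Φ x w = w → ρ x a = a}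
  add_mem' ha hb x hx := by rw [map_add, ha x hx, hb x hx]
  zero_mem' x _ := map_zero (ρ x)
  smul_mem' c a ha x hx := by rw [map_smul, ha x hx]

variable {ρ : Representation k S E} {Φ : S →* Equiv.Perm V} {R : Set V}

theorem apply_mem_siteSpace {u : V → E} (hu : u ∈ symmetricMaps ρ Φ) (w : V) :
    u w ∈ siteSpace ρ Φ w := fun x hx => by
  rw [hu x w, hx]

theorem eq_of_mem_siteSpace_of_map_eq {w : V} {a : E} (ha : a ∈ siteSpace ρ Φ w) {x y : S}
    (hxy : Φ x w = Φ y w) : ρ x a = ρ y a := by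
  have hstab : Φ (y⁻¹ * x) w = w := by
    rw [map_mul, Equiv.Perm.mul_apply, hxy, ← Equiv.Perm.mul_apply, ← map_mul, inv_mul_cancel,
      map_one, Equiv.Perm.one_apply]
  calc ρ x a = ρ y (ρ (y⁻¹ * x) a) := by rw [← Module.End.mul_apply, ← map_mul, mul_inv_cancel_left]
    _ = ρ y a := by rw [ha _ hstab]

theorem IsOrbitTransversal.eq_of_mem_symmetricMaps (hR : IsOrbitTransversal Φ R) {u v : V → E}
    (hu : u ∈ symmetricMaps ρ Φ) (hv : v ∈ symmetricMaps ρ Φ) (huv : Set.EqOn u v R) : u = v := by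
  funext i
  obtain ⟨w, ⟨hw, x, rfl⟩, -⟩ := hR i
  rw [← hu, ← hv, huv hw]

theorem IsOrbitTransversal.exists_mem_symmetricMaps_extending (hR : IsOrbitTransversal Φ R)
    (a : ∀ w : R, siteSpace ρ Φ w) :
    ∃ u ∈ symmetricMaps ρ Φ, ∀ w : R, u w = a w := by
  have hcover (v : V) : ∃ w : R, ∃ x : S, Φ x w = v := by
    obtain ⟨w, ⟨hw, x, hx⟩, -⟩ := hR v
    exact ⟨⟨w, hw⟩, x, hx⟩
  choose rep g hg using hcover
  have extension_apply {v : V} (w : R) (x : S) (hx : Φ x w = v) :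
      ρ (g v) (a (rep v)) = ρ x (a w) := by
    have hrep : rep v = w := Subtype.ext ((hR v).unique ⟨(rep v).2, g v, hg v⟩ ⟨w.2, x, hx⟩)
    have hgx : Φ (g v) w = Φ x w := by rw [hx, ← hrep, hg]
    rw [hrep, eq_of_mem_siteSpace_of_map_eq (a w).2 hgx]
  refine ⟨fun v => ρ (g v) (a (rep v)), fun x i => ?_, fun w => ?_⟩
  · have hxg : Φ (x * g i) (rep i) = Φ x i := by rw [map_mul, Equiv.Perm.mul_apply, hg]
    calc ρ x (ρ (g i) (a (rep i)))
        = ρ (x * g i) (a (rep i)) := by rw [map_mul, Module.End.mul_apply]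
      _ = ρ (g (Φ x i)) (a (rep (Φ x i))) := (extension_apply (rep i) (x * g i) hxg).symm
  · have hone : Φ 1 w = w := by rw [map_one, Equiv.Perm.one_apply]
    exact (extension_apply w 1 hone).trans (by rw [map_one, Module.End.one_apply])

/-- A symmetric map amounts to a choice, at each orbit representative, of a vector fixed by its
stabilizer. -/
def IsOrbitTransversal.symmetricMapsEquiv (hR : IsOrbitTransversal Φ R) :
    symmetricMaps ρ Φ ≃ₗ[k] ∀ w : R, siteSpace ρ Φ w :=
  LinearEquiv.ofBijective
    { toFun := fun u w => ⟨u.1 w, apply_mem_siteSpace u.2 w⟩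
      map_add' := fun _ _ => rfl
      map_smul' := fun _ _ => rfl }
    ⟨fun u v huv => Subtype.ext <| hR.eq_of_mem_symmetricMaps u.2 v.2 fun w hw =>
        congrArg Subtype.val (congrFun huv ⟨w, hw⟩),
      fun a => by
        obtain ⟨u, hu, hua⟩ := hR.exists_mem_symmetricMaps_extending a
        exact ⟨⟨u, hu⟩, funext fun w => Subtype.ext (hua w)⟩⟩

end CommSemiring

section Field

variable [Field k] [AddCommGroup E] [Module k E] [FiniteDimensional k E]
  {ρ : Representation k S E} {Φ : S →* Equiv.Perm V} {R : Finset V}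

theorem IsOrbitTransversal.finiteDimensional_symmetricMaps
    (hR : IsOrbitTransversal Φ (R : Set V)) : FiniteDimensional k (symmetricMaps ρ Φ) :=
  Module.Finite.equiv hR.symmetricMapsEquiv.symm

theorem IsOrbitTransversal.finrank_symmetricMaps (hR : IsOrbitTransversal Φ (R : Set V)) :
    finrank k (symmetricMaps ρ Φ) = ∑ w ∈ R, finrank k (siteSpace ρ Φ w) := by
  rw [hR.symmetricMapsEquiv.finrank_eq, finrank_pi_fintype]
  exact Finset.sum_coe_sort R fun w => finrank k (siteSpace ρ Φ w)

end Field

end SymmetricMaps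

section Frameworks

variable {S V E : Type*} [Group S] [NormedAddCommGroup E] [InnerProductSpace ℝ E]

/-- The rigidity map of the complete graph on the configuration `p`: to a velocity field `u` it
assigns half the rate of change of the squared distance of each pair of vertices. -/
def rigidityMap (p : V → E) : (V → E) →ₗ[ℝ] (Sym2 V → ℝ) where
  toFun u := Sym2.lift ⟨fun i j => ⟪p i - p j, u i - u j⟫_ℝ, fun i j => by
    simp only [← inner_neg_neg (p i - p j), neg_sub]⟩
  map_add' u v := funext <| Sym2.ind fun i j => by
    simp only [Sym2.lift_mk, Pi.add_apply, add_sub_add_comm, inner_add_right]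
  map_smul' a u := funext <| Sym2.ind fun i j => by
    simp only [Sym2.lift_mk, Pi.smul_apply, ← smul_sub, inner_smul_right, RingHom.id_apply,
      smul_eq_mul]

/-- The infinitesimal motions of the framework `(G, p)`, encoded as the velocity fields at which
the rigidity map vanishes on the edges of `G`. -/
def infinitesimalMotions (G : SimpleGraph V) (p : V → E) : Submodule ℝ (V → E) :=
  (Submodule.pi G.edgeSet fun _ => ⊥).comap (rigidityMap p)

/-- The infinitesimal rigid motions of the configuration `p`; skew-symmetry of the linear part is
expressed without coordinates, by the adjoint. -/
def rigidMotions [FiniteDimensional ℝ E] (p : V → E) : Submodule ℝ (V → E) where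
  carrier := {u | ∃ A ∈ skewAdjoint (E →ₗ[ℝ] E), ∃ t, ∀ i, u i = A (p i) + t}
  add_mem' := by
    rintro u v ⟨A, hA, s, hu⟩ ⟨B, hB, t, hv⟩
    refine ⟨A + B, add_mem hA hB, s + t, fun i => ?_⟩
    rw [Pi.add_apply, hu, hv, LinearMap.add_apply, add_add_add_comm]
  zero_mem' := ⟨0, zero_mem _, 0, fun i => by simp⟩
  smul_mem' := by
    rintro a u ⟨A, hA, t, hu⟩
    refine ⟨a • A, skewAdjoint.smul_mem a hA, a • t, fun i => ?_⟩
    rw [Pi.smul_apply, hu, smul_add, LinearMap.smul_apply]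

/-- The orbits of the edges of `G` under the action induced by `Φ` on unordered pairs. -/
def edgeOrbits (Φ : S →* Equiv.Perm V) (G : SimpleGraph V) : Set (Set (Sym2 V)) :=
  {O | ∃ e ∈ G.edgeSet, O = {f | ∃ x : S, Sym2.map (Φ x) e = f}}

variable {G : SimpleGraph V} {ρ : Representation ℝ S E} {Φ : S →* Equiv.Perm V} {p u : V → E}

theorem rigidityMap_map (hρ : ∀ x a b, ⟪ρ x a, ρ x b⟫_ℝ = ⟪a, b⟫_ℝ)
    (hp : p ∈ symmetricMaps ρ Φ) (hu : u ∈ symmetricMaps ρ Φ) (x : S) (e : Sym2 V) :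
    rigidityMap p u (e.map (Φ x)) = rigidityMap p u e := by
  induction e with
  | _ i j =>
    change ⟪p (Φ x i) - p (Φ x j), u (Φ x i) - u (Φ x j)⟫_ℝ = ⟪p i - p j, u i - u j⟫_ℝ
    rw [← hp, ← hp, ← hu, ← hu, ← map_sub, ← map_sub, hρ]

theorem mem_infinitesimalMotions_iff :
    u ∈ infinitesimalMotions G p ↔ ∀ i j, G.Adj i j → ⟪p i - p j, u i - u j⟫_ℝ = 0 :=
  ⟨fun hu i j hij => hu s(i, j) hij, fun hu => Sym2.ind hu⟩

theorem mem_infinitesimalMotions_of_edgeOrbits (hρ : ∀ x a b, ⟪ρ x a, ρ x b⟫_ℝ = ⟪a, b⟫_ℝ)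
    (hp : p ∈ symmetricMaps ρ Φ) (hu : u ∈ symmetricMaps ρ Φ)
    (hzero : ∀ O ∈ edgeOrbits Φ G, ∃ e ∈ O, rigidityMap p u e = 0) :
    u ∈ infinitesimalMotions G p := fun e he => by
  obtain ⟨_, ⟨x, rfl⟩, hx⟩ := hzero {f | ∃ x : S, Sym2.map (Φ x) e = f} ⟨e, he, rfl⟩
  rwa [rigidityMap_map hρ hp hu] at hx

theorem finrank_symmetricMaps_le_add_ncard_edgeOrbits [FiniteDimensional ℝ (symmetricMaps ρ Φ)]
    (hρ : ∀ x a b, ⟪ρ x a, ρ x b⟫_ℝ = ⟪a, b⟫_ℝ) (hp : p ∈ symmetricMaps ρ Φ)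
    (hfin : (edgeOrbits Φ G).Finite) :
    finrank ℝ (symmetricMaps ρ Φ) ≤
      finrank ℝ ↥(symmetricMaps ρ Φ ⊓ infinitesimalMotions G p) + (edgeOrbits Φ G).ncard := by
  have := hfin.fintype
  have hedge (O : edgeOrbits Φ G) : ∃ e, e ∈ O.1 := by
    obtain ⟨_, e, -, rfl⟩ := O
    exact ⟨_, 1, rfl⟩
  choose edge edge_mem using hedge
  let orbitMap : (V → E) →ₗ[ℝ] (edgeOrbits Φ G → ℝ) :=
    LinearMap.funLeft ℝ ℝ edge ∘ₗ rigidityMap p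
  have hker : symmetricMaps ρ Φ ⊓ orbitMap.ker ≤
      symmetricMaps ρ Φ ⊓ infinitesimalMotions G p := fun u ⟨hu, hzero⟩ =>
    ⟨hu, mem_infinitesimalMotions_of_edgeOrbits hρ hp hu fun O hO =>
      ⟨edge ⟨O, hO⟩, edge_mem ⟨O, hO⟩, congrFun hzero ⟨O, hO⟩⟩⟩
  have : FiniteDimensional ℝ ↥(symmetricMaps ρ Φ ⊓ infinitesimalMotions G p) :=
    Submodule.finiteDimensional_inf_left _ _
  calc finrank ℝ (symmetricMaps ρ Φ)
      ≤ finrank ℝ ↥(symmetricMaps ρ Φ ⊓ orbitMap.ker) + Fintype.card (edgeOrbits Φ G) :=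
        finrank_le_finrank_inf_ker_add_card _ orbitMap
    _ ≤ finrank ℝ ↥(symmetricMaps ρ Φ ⊓ infinitesimalMotions G p) + (edgeOrbits Φ G).ncard := by
      rw [← Nat.card_eq_fintype_card, Nat.card_coe_set_eq]
      gcongr
      exact Submodule.finrank_mono hker

end Frameworks

theorem stmt_2_general {S V E : Type*} [Group S] [NormedAddCommGroup E] [InnerProductSpace ℝ E]
    [FiniteDimensional ℝ E] (G : SimpleGraph V) (ρ : Representation ℝ S E)
    (Φ : S →* Equiv.Perm V) (p : V → E) (R : Finset V)
    (hρ : ∀ x a b, ⟪ρ x a, ρ x b⟫_ℝ = ⟪a, b⟫_ℝ) (hp : p ∈ symmetricMaps ρ Φ)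
    (hR : IsOrbitTransversal Φ (R : Set V)) (hfin : (edgeOrbits Φ G).Finite)
    (hcount : (edgeOrbits Φ G).ncard < ∑ w ∈ R, finrank ℝ (siteSpace ρ Φ w) -
      finrank ℝ ↥(symmetricMaps ρ Φ ⊓ rigidMotions p)) :
    ∃ u ∈ symmetricMaps ρ Φ ⊓ infinitesimalMotions G p, u ∉ rigidMotions p := by
  by_contra! hrigid
  have := hR.finiteDimensional_symmetricMaps (ρ := ρ)
  have hmono : finrank ℝ ↥(symmetricMaps ρ Φ ⊓ infinitesimalMotions G p) ≤
      finrank ℝ ↥(symmetricMaps ρ Φ ⊓ rigidMotions p) :=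
    have : FiniteDimensional ℝ ↥(symmetricMaps ρ Φ ⊓ rigidMotions p) :=
      Submodule.finiteDimensional_inf_left _ _
    Submodule.finrank_mono (le_inf inf_le_left hrigid)
  have hmaxwell := finrank_symmetricMaps_le_add_ncard_edgeOrbits hρ hp hfin
  rw [hR.finrank_symmetricMaps] at hmaxwell
  omega

section Matrices

/-- The tautological representation of a group of linear isometries. -/
def isometryRepresentation {E : Type*} [SeminormedAddCommGroup E] [NormedSpace ℝ E]
    (S : Subgroup (E ≃ₗᵢ[ℝ] E)) : Representation ℝ S E where
  toFun x := x.1.toLinearEquiv.toLinearMap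
  map_one' := rfl
  map_mul' _ _ := rfl

variable {d : ℕ} {V : Type*}

theorem siteSpace_isometryRepresentation (S : Subgroup (Euc d ≃ₗᵢ[ℝ] Euc d))
    (Φ : S →* Equiv.Perm V) (w : V) :
    siteSpace (isometryRepresentation S) Φ w =
      ⨅ x ∈ {x : S | Φ x w = w}, fixedSpace (x : Euc d ≃ₗᵢ[ℝ] Euc d) := by
  ext a
  simp only [Submodule.mem_iInf, fixedSpace, LinearMap.mem_ker, LinearMap.sub_apply, sub_eq_zero]
  rfl

theorem toEuclideanLin_mem_skewAdjoint_iff {𝕜 n : Type*} [RCLike 𝕜] [Fintype n] [DecidableEq n]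
    {A : Matrix n n 𝕜} :
    Matrix.toEuclideanLin A ∈ skewAdjoint (EuclideanSpace 𝕜 n →ₗ[𝕜] EuclideanSpace 𝕜 n) ↔
      A.conjTranspose = -A := by
  rw [skewAdjoint.mem_iff, LinearMap.star_eq_adjoint,
    ← Matrix.toEuclideanLin_conjTranspose_eq_adjoint, ← map_neg, EmbeddingLike.apply_eq_iff_eq]

theorem mem_rigidMotions_iff_exists_matrix {p u : V → Euc d} :
    u ∈ rigidMotions p ↔ ∃ A : Matrix (Fin d) (Fin d) ℝ, Matrix.transpose A = -A ∧
      ∃ t : Euc d, ∀ i, u i = Matrix.toEuclideanLin A (p i) + t := by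
  refine Matrix.toEuclideanLin.surjective.exists.trans (exists_congr fun A => ?_)
  rw [toEuclideanLin_mem_skewAdjoint_iff, Matrix.conjTranspose_eq_transpose_of_trivial]

theorem setOf_symmetric_rigid_eq (S : Subgroup (Euc d ≃ₗᵢ[ℝ] Euc d)) (Φ : S →* Equiv.Perm V)
    (p : V → Euc d) :
    {u : V → Euc d | (∀ (x : S) (i : V), (x : Euc d ≃ₗᵢ[ℝ] Euc d) (u i) = u (Φ x i)) ∧
      ∃ A : Matrix (Fin d) (Fin d) ℝ, Matrix.transpose A = -A ∧
        ∃ t : Euc d, ∀ i, u i = Matrix.toEuclideanLin A (p i) + t} =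
      (symmetricMaps (isometryRepresentation S) Φ ⊓ rigidMotions p : Submodule ℝ (V → Euc d)) :=
  Set.ext fun _ => and_congr_right fun _ => mem_rigidMotions_iff_exists_matrix.symm

end Matrices

/-- Theorem 6.3, fully symmetric Maxwell count: if the number `r`
of edge orbits satisfies `r < c - m`, then `(G,p)` has a fully (S,Φ)-symmetric
infinitesimal flex. -/
theorem stmt_2 {d : ℕ} {V : Type*} [Fintype V] [DecidableEq V]
    (G : SimpleGraph V)
    (S : Subgroup (Euc d ≃ₗᵢ[ℝ] Euc d))
    (Φ : S →* Equiv.Perm V)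
    (hΦadj : ∀ (x : S) (i j : V), G.Adj (Φ x i) (Φ x j) ↔ G.Adj i j)
    (p : V → Euc d) (hp : Function.Injective p)
    (hsym : ∀ (x : S) (i : V), (x : Euc d ≃ₗᵢ[ℝ] Euc d) (p i) = p (Φ x i))
    -- `R` is a set of representatives, one from each vertex orbit
    (R : Finset V)
    (hR : ∀ v : V, ∃! w : V, w ∈ R ∧ ∃ x : S, Φ x w = v)
    (c r m : ℕ)
    -- `c` is the sum over the representatives `w` of `dim U(p_w)`
    (hc : c = ∑ w ∈ R, Module.finrank ℝ
      ↥(⨅ x ∈ {x : S | Φ x w = w}, fixedSpace (x : Euc d ≃ₗᵢ[ℝ] Euc d)))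
    -- `r` is the number of edge orbits
    (hr : r = Set.ncard {O : Set (Sym2 V) |
      ∃ e ∈ G.edgeSet, O = {f | ∃ x : S, Sym2.map (Φ x) e = f}})
    -- `m` is the dimension of the space of fully symmetric infinitesimal rigid motions
    (hm : m = Set.finrank ℝ {u : V → Euc d |
      (∀ (x : S) (i : V), (x : Euc d ≃ₗᵢ[ℝ] Euc d) (u i) = u (Φ x i)) ∧
      ∃ A : Matrix (Fin d) (Fin d) ℝ, Matrix.transpose A = -A ∧
        ∃ t : Euc d, ∀ i, u i = Matrix.toEuclideanLin A (p i) + t})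
    (hcount : r < c - m) :
    ∃ u : V → Euc d,
      (∀ (x : S) (i : V), (x : Euc d ≃ₗᵢ[ℝ] Euc d) (u i) = u (Φ x i)) ∧
      (∀ i j : V, G.Adj i j → (inner ℝ (p i - p j) (u i - u j) : ℝ) = 0) ∧
      ¬ (∃ A : Matrix (Fin d) (Fin d) ℝ, Matrix.transpose A = -A ∧
        ∃ t : Euc d, ∀ i, u i = Matrix.toEuclideanLin A (p i) + t) := by
  have hc' : c = ∑ w ∈ R, finrank ℝ (siteSpace (isometryRepresentation S) Φ w) :=
    hc.trans (Finset.sum_congr rfl fun w _ => by rw [siteSpace_isometryRepresentation])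
  have hm' : m = finrank ℝ ↥(symmetricMaps (isometryRepresentation S) Φ ⊓ rigidMotions p) := by
    rw [hm, setOf_symmetric_rigid_eq, Set.finrank, Submodule.span_eq]
  obtain ⟨u, ⟨hu, hmotion⟩, hflex⟩ := stmt_2_general G (isometryRepresentation S) Φ p R
    (fun x => x.1.inner_map_map) hsym hR (Set.toFinite _) (by rwa [← hc', ← hm', edgeOrbits, ← hr])
  exact ⟨u, hu, mem_infinitesimalMotions_iff.1 hmotion,
    mt mem_rigidMotions_iff_exists_matrix.2 hflex⟩
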